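/- arXiv:1509.08252 — 14 statements merged into one kernel-verified Lean document; each statement's English description precedes it below -/
import Mathlib

section
/- Let n ≥ 2 be an integer, let ω = e^{2πi/n}, and for t ∈ ℝ let Rot(t) denote the 2×2 real rotation matrix [[cos t, −sin t],[sin t, cos t]], viewed as a complex matrix. Then (1/n)·Σ_{a=0}^{n−1} Σ_{b=0}^{n−1} ω^{−ab}·(Rot(2πa/n) ⊗ Rot(2πb/n)), where ⊗ is the Kronecker product, equals the 4×4 matrix [[c, 0, 0, −i·s], [0, c, i·s, 0], [0, i·s, c, 0], [−i·s, 0, 0, c]], where c = cos(2π/n) and s = sin(2π/n). -/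
/-!
Write `ω = exp (2πi/n)`, a primitive `n`-th root of unity. Orthogonality of characters of `ℤ/n` gives
`∑ a, ∑ b, ω ^ (-ab) ω ^ (pa) ω ^ (qb) = n ω ^ (pq)` for all integers `p`, `q` (`sum_sum_char`):
the sum over `b` vanishes unless `a ≡ q` modulo `n`, and that single `a` contributes `n ω ^ (pq)`.
Every entry of `Rot (2πa/n)` is a combination of `ω ^ a` and `ω ^ (-a)`, so every entry of the
4×4 matrix follows by bilinearity from the four cases `p, q = ±1` (`sum_sum_bilin`).
-/

open Matrix Complex
open scoped Kronecker

/-- The 2×2 rotation matrix, viewed as a complex matrix. -/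
noncomputable def Rot (t : ℝ) : Matrix (Fin 2) (Fin 2) ℂ :=
  !![(Real.cos t : ℂ), -(Real.sin t : ℂ); (Real.sin t : ℂ), (Real.cos t : ℂ)]

/-- Orthogonality of characters of `ℤ/n`, for the character `b ↦ ω ^ (kb)`. -/
lemma sum_zpow_char {n : ℕ} {ω : ℂ} (hω : IsPrimitiveRoot ω n) (k : ℤ) :
    ∑ b ∈ Finset.range n, ω ^ (k * (b : ℤ)) = if (n : ℤ) ∣ k then (n : ℂ) else 0 := by
  simp only [_root_.zpow_mul, zpow_natCast]
  split_ifs with h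
  · simp [(hω.zpow_eq_one_iff_dvd k).2 h]
  · have h1 : ω ^ k ≠ 1 := fun h' => h ((hω.zpow_eq_one_iff_dvd k).1 h')
    rw [geom_sum_eq h1, ← zpow_natCast, ← _root_.zpow_mul, mul_comm,
      _root_.zpow_mul, zpow_natCast,
      hω.pow_eq_one]
    simp

/-- The matrix `ω ^ (-ab)` of the discrete Fourier transform, paired with two characters. -/
lemma sum_sum_char {n : ℕ} (hn : 0 < n) {ω : ℂ} (hω : IsPrimitiveRoot ω n) (p q : ℤ) :
    ∑ a ∈ Finset.range n, ∑ b ∈ Finset.range n,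
      ω ^ (-((a : ℤ) * (b : ℤ))) * (ω ^ (p * (a : ℤ)) * ω ^ (q * (b : ℤ)))
      = n * ω ^ (p * q) := by
  have h0 : ω ≠ 0 := hω.ne_zero hn.ne'
  have hnz : (n : ℤ) ≠ 0 := by exact_mod_cast hn.ne'
  have hin : ∀ a : ℕ, ∑ b ∈ Finset.range n,
      ω ^ (-((a : ℤ) * (b : ℤ))) * (ω ^ (p * (a : ℤ)) * ω ^ (q * (b : ℤ)))
      = ω ^ (p * (a : ℤ)) * if (n : ℤ) ∣ q - a then (n : ℂ) else 0 := by
    intro a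
    rw [← sum_zpow_char hω, Finset.mul_sum]
    refine Finset.sum_congr rfl fun b _ => ?_
    rw [← zpow_add₀ h0, ← zpow_add₀ h0, ← zpow_add₀ h0]
    congr 1
    ring
  simp only [hin]
  -- The surviving index is the residue of `q` modulo `n`.
  obtain ⟨a₀, ha₀⟩ := Int.eq_ofNat_of_zero_le (Int.emod_nonneg q hnz)
  have hlt : (a₀ : ℤ) < n := by
    rw [← ha₀]; exact Int.emod_lt_of_pos q (by exact_mod_cast hn)
  have hdvd : (n : ℤ) ∣ q - a₀ := by rw [← ha₀]; exact Int.dvd_self_sub_emod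
  rw [Finset.sum_eq_single a₀]
  · rw [if_pos hdvd, mul_comm]
    congr 1
    have : ω ^ (p * (q - a₀)) = 1 := (hω.zpow_eq_one_iff_dvd _).2 (hdvd.mul_left p)
    rw [show p * q = p * a₀ + p * (q - a₀) by ring, zpow_add₀ h0, this, mul_one]
  · intro a ha hne
    rw [if_neg, mul_zero]
    intro hd
    have hd' : (n : ℤ) ∣ (a : ℤ) - a₀ := by
      have := dvd_sub hdvd hd
      rwa [sub_sub_sub_cancel_left] at this
    have ha' := Finset.mem_range.1 ha
    have := Int.eq_zero_of_abs_lt_dvd hd' (by rw [abs_lt]; omega)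
    omega
  · intro h
    exact absurd (Finset.mem_range.2 (by exact_mod_cast hlt)) h

/-- Bilinear extension of `sum_sum_char` over the characters `a ↦ ω ^ a` and `a ↦ ω ^ (-a)`. -/
lemma sum_sum_bilin {n : ℕ} (hn : 0 < n) {ω : ℂ} (hω : IsPrimitiveRoot ω n)
    (x x' y y' : ℂ) (f g : ℕ → ℂ)
    (hf : ∀ a : ℕ, f a = x * ω ^ (1 * (a : ℤ)) + x' * ω ^ (-1 * (a : ℤ)))
    (hg : ∀ b : ℕ, g b = y * ω ^ (1 * (b : ℤ)) + y' * ω ^ (-1 * (b : ℤ))) :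
    (n : ℂ)⁻¹ * ∑ a ∈ Finset.range n, ∑ b ∈ Finset.range n,
      ω ^ (-((a : ℤ) * (b : ℤ))) * (f a * g b)
      = (x * y + x' * y') * ω + (x * y' + x' * y) * ω⁻¹ := by
  have hnz : (n : ℂ) ≠ 0 := by exact_mod_cast hn.ne'
  have key : ∑ a ∈ Finset.range n, ∑ b ∈ Finset.range n,
      ω ^ (-((a : ℤ) * (b : ℤ))) * (f a * g b)
      = x * y * (n * ω ^ ((1 : ℤ) * 1)) + x * y' * (n * ω ^ ((1 : ℤ) * -1))
        + x' * y * (n * ω ^ ((-1 : ℤ) * 1)) + x' * y' * (n * ω ^ ((-1 : ℤ) * -1)) := by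
    simp only [← sum_sum_char hn hω, Finset.mul_sum, ← Finset.sum_add_distrib]
    refine Finset.sum_congr rfl fun a _ => Finset.sum_congr rfl fun b _ => ?_
    rw [hf, hg]
    ring
  rw [key]
  norm_num
  field_simp
  ring

/-- Lemma 1: the 4×4 representation of the quasitriangular structure of ℂCₙ. -/
theorem cyclic_R_matrix (n : ℕ) (hn : 2 ≤ n) :
    ((n : ℂ))⁻¹ • (∑ a ∈ Finset.range n, ∑ b ∈ Finset.range n,
      (Complex.exp (2 * Real.pi * Complex.I / n)) ^ (-((a : ℤ) * (b : ℤ))) •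
        (Matrix.reindex finProdFinEquiv finProdFinEquiv
          (Rot (2 * Real.pi * a / n) ⊗ₖ Rot (2 * Real.pi * b / n)) : Matrix (Fin 4) (Fin 4) ℂ))
    = !![(Real.cos (2 * Real.pi / n) : ℂ), 0, 0, -Complex.I * (Real.sin (2 * Real.pi / n) : ℂ);
         0, (Real.cos (2 * Real.pi / n) : ℂ), Complex.I * (Real.sin (2 * Real.pi / n) : ℂ), 0;
         0, Complex.I * (Real.sin (2 * Real.pi / n) : ℂ), (Real.cos (2 * Real.pi / n) : ℂ), 0;
         -Complex.I * (Real.sin (2 * Real.pi / n) : ℂ), 0, 0,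
           (Real.cos (2 * Real.pi / n) : ℂ)] := by
  have hpos : 0 < n := by omega
  have hω := Complex.isPrimitiveRoot_exp n hpos.ne'
  set ω := Complex.exp (2 * Real.pi * Complex.I / n) with hωdef
  have hz : ∀ a : ℤ, ω ^ a = Complex.exp (((2 * Real.pi * a / n : ℝ) : ℂ) * Complex.I) := by
    intro a
    rw [hωdef, ← Complex.exp_int_mul]
    congr 1
    push_cast
    ring
  have hcos : ∀ a : ℕ, Complex.cos (2 * Real.pi * a / n)
      = 1 / 2 * ω ^ (1 * (a : ℤ)) + 1 / 2 * ω ^ (-1 * (a : ℤ)) := by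
    intro a
    rw [hz, hz, Complex.cos]
    push_cast
    ring_nf
  have hsin : ∀ a : ℕ, Complex.sin (2 * Real.pi * a / n)
      = -I / 2 * ω ^ (1 * (a : ℤ)) + I / 2 * ω ^ (-1 * (a : ℤ)) := by
    intro a
    rw [hz, hz, Complex.sin]
    push_cast
    ring_nf
  have hc1 : Complex.cos (2 * Real.pi / n) = 1 / 2 * ω + 1 / 2 * ω⁻¹ := by
    simpa using hcos 1
  have hs1 : Complex.sin (2 * Real.pi / n) = -I / 2 * ω + I / 2 * ω⁻¹ := by
    simpa using hsin 1
  have hcc := sum_sum_bilin hpos hω _ _ _ _ _ _ hcos hcos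
  have hcs := sum_sum_bilin hpos hω _ _ _ _ _ _ hcos hsin
  have hsc := sum_sum_bilin hpos hω _ _ _ _ _ _ hsin hcos
  have hss := sum_sum_bilin hpos hω _ _ _ _ _ _ hsin hsin
  replace hcc := hcc.trans (show _ = Complex.cos (2 * Real.pi / n) by rw [hc1]; ring)
  replace hcs := hcs.trans (show _ = 0 by ring)
  replace hsc := hsc.trans (show _ = 0 by ring)
  replace hss := hss.trans (show _ = -(I * Complex.sin (2 * Real.pi / n)) by
    rw [hs1]; ring)
  clear_value ω
  -- The weights are made opaque so that their exponents keep the form used in the four sums.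
  obtain ⟨W, hW⟩ : ∃ W : ℕ → ℕ → ℂ, ∀ a b : ℕ, ω ^ (-((a : ℤ) * (b : ℤ))) = W a b :=
    ⟨_, fun _ _ => rfl⟩
  simp only [hW] at hcc hcs hsc hss ⊢
  have e0 : (finProdFinEquiv (m := 2) (n := 2)).symm (0 : Fin 4) = (0, 0) := by decide
  have e1 : (finProdFinEquiv (m := 2) (n := 2)).symm (1 : Fin 4) = (0, 1) := by decide
  have e2 : (finProdFinEquiv (m := 2) (n := 2)).symm (2 : Fin 4) = (1, 0) := by decide
  have e3 : (finProdFinEquiv (m := 2) (n := 2)).symm (3 : Fin 4) = (1, 1) := by decide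
  ext i j
  simp only [Matrix.smul_apply, Matrix.sum_apply, Matrix.reindex_apply, Matrix.submatrix_apply,
    smul_eq_mul, Matrix.kroneckerMap_apply]
  fin_cases i <;> fin_cases j <;>
    simp [e0, e1, e2, e3, Rot, -mul_eq_zero, hcc, hcs, hsc, hss]
end

section
/- For every integer n ≥ 2, the matrix 𝔅ₙ satisfies the braided parameter-independent Yang–Baxter equation: (𝔅ₙ ⊗ I₂)(I₂ ⊗ 𝔅ₙ)(𝔅ₙ ⊗ I₂) = (I₂ ⊗ 𝔅ₙ)(𝔅ₙ ⊗ I₂)(I₂ ⊗ 𝔅ₙ) as 8×8 complex matrices. -/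
/-!
The Yang–Baxter equation for `𝔅ₙ` is a polynomial identity in the two entries `α` and `β`: it holds
for the matrix of this shape with arbitrary complex entries `a`, `b`, so neither
`α² - β² = 1` nor the particular angle matters. Writing `R ⊗ I₂` and `I₂ ⊗ R` as explicit `8 × 8`
matrices (`RI_eightVertex`, `IR_eightVertex`) reduces the equation to comparing the 64 entries
of two triple products.
-/

open Matrix Complex
open scoped Kronecker

/-- The gate 𝔅ₙ obtained from the cyclic group of order n. -/
noncomputable def Bn (n : ℕ) : Matrix (Fin 4) (Fin 4) ℂ :=
  let α : ℂ := (Real.cos (2 * Real.pi / n) : ℂ)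
  let β : ℂ := -Complex.I * (Real.sin (2 * Real.pi / n) : ℂ)
  !![α, 0, 0, β; 0, -β, α, 0; 0, α, -β, 0; β, 0, 0, α]

/-- R ⊗ I₂ as an 8×8 matrix. -/
noncomputable def RI (R : Matrix (Fin 4) (Fin 4) ℂ) : Matrix (Fin 8) (Fin 8) ℂ :=
  Matrix.reindex finProdFinEquiv finProdFinEquiv (R ⊗ₖ (1 : Matrix (Fin 2) (Fin 2) ℂ))

/-- I₂ ⊗ R as an 8×8 matrix. -/
noncomputable def IR (R : Matrix (Fin 4) (Fin 4) ℂ) : Matrix (Fin 8) (Fin 8) ℂ :=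
  Matrix.reindex finProdFinEquiv finProdFinEquiv ((1 : Matrix (Fin 2) (Fin 2) ℂ) ⊗ₖ R)

/-- The matrix with the shape of `𝔅ₙ` and arbitrary complex entries `a`, `b` in place of
`α`, `β`. -/
def eightVertex (a b : ℂ) : Matrix (Fin 4) (Fin 4) ℂ :=
  !![a, 0, 0, b; 0, -b, a, 0; 0, a, -b, 0; b, 0, 0, a]

lemma RI_eightVertex (a b : ℂ) : RI (eightVertex a b) =
    !![a, 0, 0, 0, 0, 0, b, 0;
       0, a, 0, 0, 0, 0, 0, b;
       0, 0, -b, 0, a, 0, 0, 0;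
       0, 0, 0, -b, 0, a, 0, 0;
       0, 0, a, 0, -b, 0, 0, 0;
       0, 0, 0, a, 0, -b, 0, 0;
       b, 0, 0, 0, 0, 0, a, 0;
       0, b, 0, 0, 0, 0, 0, a] := by
  ext i j
  fin_cases i <;> fin_cases j <;>
    simp [RI, eightVertex, finProdFinEquiv, Fin.divNat, Fin.modNat]

lemma IR_eightVertex (a b : ℂ) : IR (eightVertex a b) =
    !![a, 0, 0, b, 0, 0, 0, 0;
       0, -b, a, 0, 0, 0, 0, 0;
       0, a, -b, 0, 0, 0, 0, 0;
       b, 0, 0, a, 0, 0, 0, 0;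
       0, 0, 0, 0, a, 0, 0, b;
       0, 0, 0, 0, 0, -b, a, 0;
       0, 0, 0, 0, 0, a, -b, 0;
       0, 0, 0, 0, b, 0, 0, a] := by
  ext i j
  fin_cases i <;> fin_cases j <;>
    simp [IR, eightVertex, finProdFinEquiv, Fin.divNat, Fin.modNat]

set_option maxHeartbeats 2000000 in
lemma eightVertex_yang_baxter (a b : ℂ) :
    RI (eightVertex a b) * IR (eightVertex a b) * RI (eightVertex a b) =
      IR (eightVertex a b) * RI (eightVertex a b) * IR (eightVertex a b) := by
  rw [RI_eightVertex, IR_eightVertex]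
  simp only [Matrix.cons_mul, Matrix.vecMul_cons, Matrix.empty_mul,
    Matrix.vecHead, Matrix.vecTail, Matrix.smul_cons, Matrix.smul_empty, Matrix.add_cons,
    Matrix.empty_add_empty, Matrix.cons_val_zero, Matrix.cons_val_succ,
    Function.comp_def, Matrix.empty_vecMul, Equiv.symm_apply_apply,
    smul_eq_mul, mul_zero, zero_mul, add_zero, zero_add,
    zero_smul]
  ext i j
  fin_cases i <;> fin_cases j <;> simp <;> ring

/-- 𝔅ₙ satisfies the braided parameter-independent Yang–Baxter equation. -/
theorem Bn_yang_baxter (n : ℕ) (hn : 2 ≤ n) :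
    RI (Bn n) * IR (Bn n) * RI (Bn n) = IR (Bn n) * RI (Bn n) * IR (Bn n) :=
  eightVertex_yang_baxter _ _
end

section
/- For every integer n ≥ 3 with n ≠ 4, the vector 𝔅ₙ|00⟩ = (cos(2π/n), 0, 0, −i·sin(2π/n)) ∈ ℂ⁴ is entangled: there exist no vectors u, v ∈ ℂ² such that (cos(2π/n), 0, 0, −i·sin(2π/n)) = u ⊗ v, i.e. whose components satisfy w_{ij} = uᵢ·vⱼ. Consequently the gate 𝔅ₙ is entangling for n ≠ 2, 4. -/
/-!
A vector `w = u ⊗ v` in `ℂ² ⊗ ℂ²` satisfies `w₀₀ * w₁₁ = w₀₁ * w₁₀`. Here the right-hand side is `0`,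
so it suffices that neither `cos (2π/n)` nor `sin (2π/n)` vanishes. The angle `2π/n` lies in
`(0, π)`, and it equals `π/2` only for `n = 4`.
-/

open Matrix Complex

theorem sin_two_pi_div_ne_zero (n : ℕ) (hn : 3 ≤ n) : Real.sin (2 * Real.pi / n) ≠ 0 := by
  have hn' : (3 : ℝ) ≤ n := by exact_mod_cast hn
  have hpi := Real.pi_pos
  refine (Real.sin_pos_of_pos_of_lt_pi (by positivity) ?_).ne'
  rw [div_lt_iff₀ (by linarith)]
  nlinarith

theorem cos_two_pi_div_ne_zero (n : ℕ) (hn : 3 ≤ n) (h4 : n ≠ 4) :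
    Real.cos (2 * Real.pi / n) ≠ 0 := by
  have hpi := Real.pi_pos
  rcases (by omega : n = 3 ∨ 5 ≤ n) with rfl | h5
  · refine (Real.cos_neg_of_pi_div_two_lt_of_lt ?_ ?_).ne <;> push_cast <;> linarith
  · have hn' : (5 : ℝ) ≤ n := by exact_mod_cast h5
    have hpos : 0 < 2 * Real.pi / n := by positivity
    refine (Real.cos_pos_of_mem_Ioo ⟨by linarith, ?_⟩).ne'
    rw [div_lt_iff₀ (by linarith)]
    nlinarith

/-- For n ≥ 3 with n ≠ 4, the vector 𝔅ₙ|00⟩ = (cos(2π/n), 0, 0, −i sin(2π/n)) is entangled: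
it is not a product state u ⊗ v. -/
theorem Bn_ket00_entangled (n : ℕ) (hn : 3 ≤ n) (h4 : n ≠ 4) :
    ¬ ∃ u v : Fin 2 → ℂ,
      (![(Real.cos (2 * Real.pi / n) : ℂ), 0, 0,
          -Complex.I * (Real.sin (2 * Real.pi / n) : ℂ)] : Fin 4 → ℂ)
        = ![u 0 * v 0, u 0 * v 1, u 1 * v 0, u 1 * v 1] := by
  rintro ⟨u, v, h⟩
  have h00 := congrFun h 0
  have h01 := congrFun h 1
  have h10 := congrFun h 2
  have h11 := congrFun h 3
  simp only [Matrix.cons_val] at h00 h01 h10 h11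
  have hdet : (Real.cos (2 * Real.pi / n) : ℂ) *
      (-Complex.I * (Real.sin (2 * Real.pi / n) : ℂ)) = 0 := by
    rw [h00, h11]
    linear_combination -(u 1 * v 0) * h01
  have hc : (Real.cos (2 * Real.pi / n) : ℂ) ≠ 0 :=
    Complex.ofReal_ne_zero.mpr (cos_two_pi_div_ne_zero n hn h4)
  have hs : (Real.sin (2 * Real.pi / n) : ℂ) ≠ 0 :=
    Complex.ofReal_ne_zero.mpr (sin_two_pi_div_ne_zero n hn)
  exact mul_ne_zero hc (mul_ne_zero (neg_ne_zero.mpr Complex.I_ne_zero) hs) hdet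
end

section
/- Let n ≥ 2 be an integer and φ ∈ ℝ, and let Q = [[e^{iφ/2}, 0], [0, 1]]. Then (Q ⊗ Q) · 𝔅ₙ · (Q ⊗ Q)⁻¹ = 𝔅ₙ,φ, where ⊗ is the Kronecker product; that is, conjugating 𝔅ₙ by Q ⊗ Q yields the q-deformed matrix 𝔅ₙ,φ. -/
/-!
In the basis 00, 01, 10, 11 the matrix `Q ⊗ Q` is `diag(q², q, q, 1)` with `q = e^{iφ/2}`
(`reindex_Q_kronecker_Q`). Conjugation by a diagonal matrix `diag(d)` multiplies the `(i, j)` entry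
by `dᵢ / dⱼ`. This factor is `1` on the diagonal and on the middle block, and it is
`q² = e^{iφ}` and `q⁻² = e^{-iφ}` at the two corners `(00, 11)` and `(11, 00)`.
-/

open Matrix Complex
open scoped Kronecker

/-- The q-deformed gate 𝔅ₙ,φ. -/
noncomputable def Bnφ (n : ℕ) (φ : ℝ) : Matrix (Fin 4) (Fin 4) ℂ :=
  let a : ℂ := (Real.cos (2 * Real.pi / n) : ℂ)
  let b : ℂ := (Real.sin (2 * Real.pi / n) : ℂ)
  !![a, 0, 0, -Complex.I * b * Complex.exp (Complex.I * φ);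
     0, Complex.I * b, a, 0;
     0, a, Complex.I * b, 0;
     -Complex.I * b * Complex.exp (-(Complex.I * φ)), 0, 0, a]

/-- The diagonal phase matrix Q. -/
noncomputable def Q (φ : ℝ) : Matrix (Fin 2) (Fin 2) ℂ :=
  !![Complex.exp (Complex.I * φ / 2), 0; 0, 1]

/-- In the basis 00, 01, 10, 11 the matrix `Q ⊗ Q` is `diag(q², q, q, 1)` with `q = e^{iφ/2}`. -/
theorem reindex_Q_kronecker_Q (φ : ℝ) :
    (Matrix.reindex finProdFinEquiv finProdFinEquiv (Q φ ⊗ₖ Q φ) : Matrix (Fin 4) (Fin 4) ℂ) =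
      Matrix.diagonal ![Complex.exp (Complex.I * φ / 2) ^ 2, Complex.exp (Complex.I * φ / 2),
        Complex.exp (Complex.I * φ / 2), 1] := by
  ext i j
  fin_cases i <;> fin_cases j <;>
    simp [Q, Matrix.kroneckerMap_apply, finProdFinEquiv, Fin.divNat, Fin.modNat, sq]

/-- Conjugating 𝔅ₙ by Q ⊗ Q yields the q-deformed matrix 𝔅ₙ,φ. -/
theorem Bn_q_deformation (n : ℕ) (hn : 2 ≤ n) (φ : ℝ) :
    (Matrix.reindex finProdFinEquiv finProdFinEquiv (Q φ ⊗ₖ Q φ) : Matrix (Fin 4) (Fin 4) ℂ)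
      * Bn n *
      (Matrix.reindex finProdFinEquiv finProdFinEquiv (Q φ ⊗ₖ Q φ) : Matrix (Fin 4) (Fin 4) ℂ)⁻¹
    = Bnφ n φ := by
  rw [reindex_Q_kronecker_Q]
  have hq : Complex.exp (Complex.I * φ / 2) ≠ 0 := Complex.exp_ne_zero _
  have h1 : Complex.exp (Complex.I * φ) = Complex.exp (Complex.I * φ / 2) ^ 2 := by
    rw [← Complex.exp_nat_mul]
    congr 1
    push_cast
    ring
  have h2 : Complex.exp (-(Complex.I * φ)) = (Complex.exp (Complex.I * φ / 2) ^ 2)⁻¹ := by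
    rw [Complex.exp_neg, h1]
  have hinv : (Matrix.diagonal ![Complex.exp (Complex.I * φ / 2) ^ 2,
      Complex.exp (Complex.I * φ / 2), Complex.exp (Complex.I * φ / 2), 1])⁻¹ =
      Matrix.diagonal ![(Complex.exp (Complex.I * φ / 2) ^ 2)⁻¹,
        (Complex.exp (Complex.I * φ / 2))⁻¹, (Complex.exp (Complex.I * φ / 2))⁻¹, 1] := by
    apply Matrix.inv_eq_right_inv
    rw [Matrix.diagonal_mul_diagonal, ← Matrix.diagonal_one]
    congr 1
    ext i
    fin_cases i <;> simp [hq]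
  rw [hinv, Bnφ, h1, h2, Bn]
  generalize Complex.exp (Complex.I * φ / 2) = q at hq
  ext i j
  rw [Matrix.mul_diagonal, Matrix.diagonal_mul]
  fin_cases i <;> fin_cases j <;> simp <;> field_simp
end

section
/- For every integer n ≥ 2 and every φ ∈ ℝ, the q-deformed matrix 𝔅ₙ,φ is unitary and satisfies the braided parameter-independent Yang–Baxter equation (𝔅ₙ,φ ⊗ I₂)(I₂ ⊗ 𝔅ₙ,φ)(𝔅ₙ,φ ⊗ I₂) = (I₂ ⊗ 𝔅ₙ,φ)(𝔅ₙ,φ ⊗ I₂)(I₂ ⊗ 𝔅ₙ,φ). -/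
/-!
Write `P` for the swap of the two tensor factors, and let `Y` be the 2×2 matrix with zero diagonal
and off-diagonal entries `i e^{iφ/2}`, `-i e^{-iφ/2}`, so that `Y² = 1`. The gate equals
`P (a + i b Y ⊗ Y)`. It is unitary because `a² + b² = 1`, and it satisfies the braid relation
because `P` does and the operators `a + i b Y ⊗ Y` acting on different pairs of tensor factors
commute.

The formal proof checks the resulting identities entry by entry. The entries are replaced by
values `a`, `b`, `e`, `f` (`gate`); then `gate_unitary` uses `a² + b² = 1` and `e f = 1`, with
`a`, `b` real and `e`, `f` conjugate, while `gate_yang_baxter` needs only `e f = 1`.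
-/

open Matrix Complex
open scoped Kronecker

/-- The gate with its entries `cos`, `sin`, `exp (iφ)`, `exp (-iφ)` replaced by indeterminate
values `a`, `b`, `e`, `f`. -/
noncomputable def gate (a b e f : ℂ) : Matrix (Fin 4) (Fin 4) ℂ :=
  !![a, 0, 0, -Complex.I * b * e;
     0, Complex.I * b, a, 0;
     0, a, Complex.I * b, 0;
     -Complex.I * b * f, 0, 0, a]

/-- The rows are orthonormal: row norms reduce to `a² + b² = 1`, and the mixed products vanish
because `a` is real while the other entry of the row carries a factor `i`. -/
lemma gate_unitary (a b e f : ℂ) (ha : star a = a) (hb : star b = b) (he : star e = f)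
    (hf : star f = e) (hab : a * a + b * b = 1) (hef : e * f = 1) :
    gate a b e f * (gate a b e f)ᴴ = 1 := by
  simp only [Complex.star_def] at ha hb he hf
  ext i j
  fin_cases i <;> fin_cases j <;>
    simp [gate, Matrix.mul_apply, Fin.sum_univ_four, ha, hb, he, hf] <;>
    grind [Complex.I_mul_I]

lemma RI_apply (R : Matrix (Fin 4) (Fin 4) ℂ) (i j : Fin 8) :
    RI R i j = if (i : ℕ) % 2 = (j : ℕ) % 2 then
      R (Fin.divNat (m := 4) (n := 2) i) (Fin.divNat (m := 4) (n := 2) j) else 0 := by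
  change R (Fin.divNat (m := 4) (n := 2) i) (Fin.divNat (m := 4) (n := 2) j) *
    (1 : Matrix (Fin 2) (Fin 2) ℂ) (Fin.modNat (m := 4) (n := 2) i)
      (Fin.modNat (m := 4) (n := 2) j) = _
  rw [Matrix.one_apply, mul_ite, mul_one, mul_zero]
  simp only [Fin.ext_iff, Fin.coe_modNat]

lemma IR_apply (R : Matrix (Fin 4) (Fin 4) ℂ) (i j : Fin 8) :
    IR R i j = if (i : ℕ) / 4 = (j : ℕ) / 4 then
      R (Fin.modNat (m := 2) (n := 4) i) (Fin.modNat (m := 2) (n := 4) j) else 0 := by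
  change (1 : Matrix (Fin 2) (Fin 2) ℂ) (Fin.divNat (m := 2) (n := 4) i)
      (Fin.divNat (m := 2) (n := 4) j) *
    R (Fin.modNat (m := 2) (n := 4) i) (Fin.modNat (m := 2) (n := 4) j) = _
  rw [Matrix.one_apply, ite_mul, one_mul, zero_mul]
  simp only [Fin.ext_iff, Fin.coe_divNat]

lemma RI_gate (a b e f : ℂ) : RI (gate a b e f) =
    !![a, 0, 0, 0, 0, 0, -Complex.I * b * e, 0;
       0, a, 0, 0, 0, 0, 0, -Complex.I * b * e;
       0, 0, Complex.I * b, 0, a, 0, 0, 0;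
       0, 0, 0, Complex.I * b, 0, a, 0, 0;
       0, 0, a, 0, Complex.I * b, 0, 0, 0;
       0, 0, 0, a, 0, Complex.I * b, 0, 0;
       -Complex.I * b * f, 0, 0, 0, 0, 0, a, 0;
       0, -Complex.I * b * f, 0, 0, 0, 0, 0, a] := by
  ext i j
  rw [RI_apply]
  fin_cases i <;> fin_cases j <;> simp [gate, Fin.divNat]

lemma IR_gate (a b e f : ℂ) : IR (gate a b e f) =
    !![a, 0, 0, -Complex.I * b * e, 0, 0, 0, 0;
       0, Complex.I * b, a, 0, 0, 0, 0, 0;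
       0, a, Complex.I * b, 0, 0, 0, 0, 0;
       -Complex.I * b * f, 0, 0, a, 0, 0, 0, 0;
       0, 0, 0, 0, a, 0, 0, -Complex.I * b * e;
       0, 0, 0, 0, 0, Complex.I * b, a, 0;
       0, 0, 0, 0, 0, a, Complex.I * b, 0;
       0, 0, 0, 0, -Complex.I * b * f, 0, 0, a] := by
  ext i j
  rw [IR_apply]
  fin_cases i <;> fin_cases j <;> simp [gate, Fin.modNat]

set_option maxHeartbeats 1600000 in
/-- Entrywise, the braid relation is a polynomial identity in `a`, `b`, `e`, `f` modulo `e f = 1`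
and `i² = -1`; the relation `a² + b² = 1` plays no role. -/
lemma gate_yang_baxter (a b e f : ℂ) (hef : e * f = 1) :
    RI (gate a b e f) * IR (gate a b e f) * RI (gate a b e f)
      = IR (gate a b e f) * RI (gate a b e f) * IR (gate a b e f) := by
  have hI := Complex.I_mul_I
  rw [RI_gate, IR_gate]
  ext i j
  fin_cases i <;> fin_cases j <;>
    simp [Matrix.mul_apply, Fin.sum_univ_eight] <;>
    grind

/-- 𝔅ₙ,φ is unitary and satisfies the braided Yang–Baxter equation. -/
theorem Bnφ_unitary_and_yang_baxter (n : ℕ) (hn : 2 ≤ n) (φ : ℝ) :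
    Bnφ n φ * (Bnφ n φ)ᴴ = 1 ∧
    RI (Bnφ n φ) * IR (Bnφ n φ) * RI (Bnφ n φ)
      = IR (Bnφ n φ) * RI (Bnφ n φ) * IR (Bnφ n φ) := by
  have hef : Complex.exp (Complex.I * φ) * Complex.exp (-(Complex.I * φ)) = 1 := by
    rw [← Complex.exp_add, add_neg_cancel, Complex.exp_zero]
  have hab : (Real.cos (2 * Real.pi / n) : ℂ) * (Real.cos (2 * Real.pi / n) : ℂ)
      + (Real.sin (2 * Real.pi / n) : ℂ) * (Real.sin (2 * Real.pi / n) : ℂ) = 1 := by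
    norm_cast
    linear_combination Real.cos_sq_add_sin_sq (2 * Real.pi / n)
  have he : star (Complex.exp (Complex.I * φ)) = Complex.exp (-(Complex.I * φ)) := by
    simp [← Complex.exp_conj]
  have hf : star (Complex.exp (-(Complex.I * φ))) = Complex.exp (Complex.I * φ) := by
    rw [← he, star_star]
  refine ⟨?_, gate_yang_baxter _ _ _ _ hef⟩
  exact gate_unitary _ _ _ _ (Complex.conj_ofReal _) (Complex.conj_ofReal _) he hf hab hef
end

section
/- Let n ≥ 2 be an integer and φ ∈ ℝ, and set a = cos(2π/n), b = sin(2π/n). Then each of the three complex numbers a + i·b, a − i·b, and −a + i·b is an eigenvalue of the matrix 𝔅ₙ,φ, i.e. for each of these values λ there exists a nonzero vector v ∈ ℂ⁴ with 𝔅ₙ,φ · v = λ·v. -/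
open Matrix Complex

/-- The numbers a + i·b, a − i·b and −a + i·b, with a = cos(2π/n), b = sin(2π/n),
are eigenvalues of 𝔅ₙ,φ. -/
theorem Bnφ_eigenvalues (n : ℕ) (hn : 2 ≤ n) (φ : ℝ) :
    (∃ v : Fin 4 → ℂ, v ≠ 0 ∧ (Bnφ n φ).mulVec v =
      ((Real.cos (2 * Real.pi / n) : ℂ) + Complex.I * (Real.sin (2 * Real.pi / n) : ℂ)) • v) ∧
    (∃ v : Fin 4 → ℂ, v ≠ 0 ∧ (Bnφ n φ).mulVec v =
      ((Real.cos (2 * Real.pi / n) : ℂ) - Complex.I * (Real.sin (2 * Real.pi / n) : ℂ)) • v) ∧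
    (∃ v : Fin 4 → ℂ, v ≠ 0 ∧ (Bnφ n φ).mulVec v =
      (-(Real.cos (2 * Real.pi / n) : ℂ) + Complex.I * (Real.sin (2 * Real.pi / n) : ℂ)) • v) := by
  -- The span of the basis vectors 01, 10 carries `a + i b` and `-a + i b` (symmetric and
  -- antisymmetric vectors); the span of 00, 11 carries `a - i b` via `(exp (iφ), 0, 0, 1)`.
  refine ⟨⟨![0, 1, 1, 0], fun h => ?_, ?_⟩,
    ⟨![Complex.exp (Complex.I * φ), 0, 0, 1], fun h => ?_, ?_⟩,
    ⟨![0, 1, -1, 0], fun h => ?_, ?_⟩⟩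
  · simpa using congrFun h 1
  · ext i
    fin_cases i <;> simp [Bnφ, Matrix.mulVec, dotProduct, Fin.sum_univ_four] <;> ring
  · simpa using congrFun h 3
  · have hexp : Complex.exp (-(Complex.I * φ)) * Complex.exp (Complex.I * φ) = 1 := by
      rw [← Complex.exp_add]
      simp
    ext i
    fin_cases i <;> simp [Bnφ, Matrix.mulVec, dotProduct, Fin.sum_univ_four, mul_assoc, hexp] <;>
      ring
  · simpa using congrFun h 1
  · ext i
    fin_cases i <;> simp [Bnφ, Matrix.mulVec, dotProduct, Fin.sum_univ_four] <;> ring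
end

section
/- Let n ≥ 3 be an odd integer, ω = e^{2πi/n}, and for t ∈ ℝ let Rot(t) = [[cos t, −sin t],[sin t, cos t]]. Then Σ_{a=1}^{(n−1)/2} Σ_{b=0}^{n−1} ω^{−ab}·( Rot(2πa/n) ⊗ Rot(2πb/n) + Rot(2π(n−a)/n) ⊗ Rot(2π(n−b)/n) ) = n · [[c, 0, 0, −i·s], [0, c, i·s, 0], [0, i·s, c, 0], [−i·s, 0, 0, c]], where c = cos(2π/n), s = sin(2π/n), and ⊗ is the Kronecker product. -/
/-!
Writing `J` for the rotation by a right angle, `Rot t = cos t • 1 + sin t • J`. Replacing `(a, b)` by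
`(n - a, n - b)` negates both angles, so the mixed terms `1 ⊗ J` and `J ⊗ 1` cancel and the summand is
`ω ^ (-ab) • (2 cos α cos β • 1 + 2 sin α sin β • (J ⊗ J))` with `α = 2πa/n`, `β = 2πb/n`
(`pair_eq`). Expanding `cos β` and `sin β` in powers of `ω`, orthogonality of the characters of `ℤ/n`
(`sum_zpow`) shows that the sum over `b` vanishes unless `a ≡ ±1` modulo `n`; in the range
`1 ≤ a ≤ (n - 1) / 2` this leaves only `a = 1` (`sum_cos`, `sum_sin`).
-/

open Matrix Complex
open scoped Kronecker

/-- The Kronecker square `J ⊗ J` of the rotation `J` by a right angle, as a `4 × 4` matrix. -/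
def rightAngleSq : Matrix (Fin 4) (Fin 4) ℂ :=
  !![0, 0, 0, 1; 0, 0, -1, 0; 0, -1, 0, 0; 1, 0, 0, 0]

theorem angle_compl (n a : ℕ) (hn : n ≠ 0) (ha : a ≤ n) :
    2 * Real.pi * ((n - a : ℕ) : ℝ) / n = 2 * Real.pi - 2 * Real.pi * a / n := by
  have : (n : ℝ) ≠ 0 := by exact_mod_cast hn
  rw [Nat.cast_sub ha]
  field_simp

theorem pair_eq (x y : ℝ) :
    (Matrix.reindex finProdFinEquiv finProdFinEquiv (Rot x ⊗ₖ Rot y) : Matrix (Fin 4) (Fin 4) ℂ)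
      + (Matrix.reindex finProdFinEquiv finProdFinEquiv
          (Rot (2 * Real.pi - x) ⊗ₖ Rot (2 * Real.pi - y)) : Matrix (Fin 4) (Fin 4) ℂ)
    = (2 * (Real.cos x : ℂ) * Real.cos y) • (1 : Matrix (Fin 4) (Fin 4) ℂ)
      + (2 * (Real.sin x : ℂ) * Real.sin y) • rightAngleSq := by
  ext i j
  fin_cases i <;> fin_cases j <;>
    simp [Rot, rightAngleSq, finProdFinEquiv, Fin.divNat, Fin.modNat, Real.cos_two_pi_sub,
      Real.sin_two_pi_sub, -Complex.ofReal_cos, -Complex.ofReal_sin] <;> ring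

theorem sum_zpow {n : ℕ} {w : ℂ} (hw : IsPrimitiveRoot w n) (k : ℤ) :
    ∑ b ∈ Finset.range n, (w ^ k) ^ b = if (n : ℤ) ∣ k then (n : ℂ) else 0 := by
  split_ifs with h
  · simp [(hw.zpow_eq_one_iff_dvd k).2 h]
  · have h1 : w ^ k ≠ 1 := fun h' => h ((hw.zpow_eq_one_iff_dvd k).1 h')
    have h2 : (w ^ k) ^ n = 1 := by
      rw [← zpow_natCast, ← _root_.zpow_mul, mul_comm, _root_.zpow_mul, zpow_natCast, hw.pow_eq_one,
        _root_.one_zpow]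
    rw [geom_sum_eq h1, h2, sub_self, zero_div]

theorem exp_angle (n b : ℕ) :
    Complex.exp (((2 * Real.pi * b / n : ℝ) : ℂ) * Complex.I)
      = Complex.exp (2 * Real.pi * Complex.I / n) ^ b := by
  rw [← Complex.exp_nat_mul]
  congr 1
  push_cast
  ring

theorem exp_neg_angle (n b : ℕ) :
    Complex.exp (-((2 * Real.pi * b / n : ℝ) : ℂ) * Complex.I)
      = (Complex.exp (2 * Real.pi * Complex.I / n) ^ b)⁻¹ := by
  rw [neg_mul, Complex.exp_neg, exp_angle]

theorem zpow_shift {w : ℂ} (hw : w ≠ 0) (a b : ℕ) :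
    (w ^ (1 - (a : ℤ))) ^ b = w ^ (-((a : ℤ) * (b : ℤ))) * w ^ b ∧
    (w ^ (-1 - (a : ℤ))) ^ b = w ^ (-((a : ℤ) * (b : ℤ))) * (w ^ b)⁻¹ := by
  constructor
  · rw [← zpow_natCast, ← zpow_natCast, ← _root_.zpow_mul, ← zpow_add₀ hw]
    congr 1
    ring
  · rw [← zpow_natCast, ← zpow_natCast, ← _root_.zpow_mul, ← _root_.zpow_neg, ← zpow_add₀ hw]
    congr 1
    ring

/-- In the range of summation, `a ≡ 1` modulo `n` only for `a = 1`, and `a ≡ -1` never holds. -/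
theorem dvd_shift {n a : ℕ} (hn : 3 ≤ n) (h1 : 1 ≤ a) (h2 : a ≤ (n - 1) / 2) :
    ((n : ℤ) ∣ 1 - (a : ℤ) ↔ a = 1) ∧ ¬ (n : ℤ) ∣ -1 - (a : ℤ) := by
  refine ⟨⟨fun h => ?_, fun h => by simp [h]⟩, fun h => ?_⟩
  · have := Int.eq_zero_of_abs_lt_dvd h (by rw [abs_lt]; constructor <;> omega)
    omega
  · have := Int.eq_zero_of_abs_lt_dvd h (by rw [abs_lt]; constructor <;> omega)
    omega

theorem sum_cos {n a : ℕ} (hn : 3 ≤ n) (h1 : 1 ≤ a) (h2 : a ≤ (n - 1) / 2) :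
    ∑ b ∈ Finset.range n, (Complex.exp (2 * Real.pi * Complex.I / n)) ^ (-((a : ℤ) * (b : ℤ)))
      * (Real.cos (2 * Real.pi * b / n) : ℂ) = if a = 1 then (n : ℂ) / 2 else 0 := by
  have hw := Complex.isPrimitiveRoot_exp n (by omega)
  have e1 := sum_zpow hw (1 - (a : ℤ))
  have e2 := sum_zpow hw (-1 - (a : ℤ))
  obtain ⟨d1, d2⟩ := dvd_shift hn h1 h2
  simp only [d1] at e1
  rw [if_neg d2] at e2
  trans (1 / 2 : ℂ) * ((if a = 1 then (n : ℂ) else 0) + 0)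
  · rw [← e1, ← e2, ← Finset.sum_add_distrib, Finset.mul_sum]
    refine Finset.sum_congr rfl fun b _ => ?_
    obtain ⟨z1, z2⟩ := zpow_shift (Complex.exp_ne_zero (2 * Real.pi * Complex.I / n)) a b
    rw [z1, z2, Complex.ofReal_cos, Complex.cos, exp_angle, exp_neg_angle]
    ring
  · split_ifs <;> ring

theorem sum_sin {n a : ℕ} (hn : 3 ≤ n) (h1 : 1 ≤ a) (h2 : a ≤ (n - 1) / 2) :
    ∑ b ∈ Finset.range n, (Complex.exp (2 * Real.pi * Complex.I / n)) ^ (-((a : ℤ) * (b : ℤ)))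
      * (Real.sin (2 * Real.pi * b / n) : ℂ)
      = if a = 1 then -Complex.I * (n : ℂ) / 2 else 0 := by
  have hw := Complex.isPrimitiveRoot_exp n (by omega)
  have e1 := sum_zpow hw (1 - (a : ℤ))
  have e2 := sum_zpow hw (-1 - (a : ℤ))
  obtain ⟨d1, d2⟩ := dvd_shift hn h1 h2
  simp only [d1] at e1
  rw [if_neg d2] at e2
  trans (Complex.I / 2 : ℂ) * (0 - (if a = 1 then (n : ℂ) else 0))
  · rw [← e1, ← e2, ← Finset.sum_sub_distrib, Finset.mul_sum]
    refine Finset.sum_congr rfl fun b _ => ?_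
    obtain ⟨z1, z2⟩ := zpow_shift (Complex.exp_ne_zero (2 * Real.pi * Complex.I / n)) a b
    rw [z1, z2, Complex.ofReal_sin, Complex.sin, exp_angle, exp_neg_angle]
    ring
  · split_ifs <;> ring

/-- Fact 3 of the Appendix: the key computational step for odd n. -/
theorem cyclic_fact3_odd (n : ℕ) (hn : 3 ≤ n) (hodd : Odd n) :
    (∑ a ∈ Finset.Icc 1 ((n - 1) / 2), ∑ b ∈ Finset.range n,
      (Complex.exp (2 * Real.pi * Complex.I / n)) ^ (-((a : ℤ) * (b : ℤ))) •
        ((Matrix.reindex finProdFinEquiv finProdFinEquiv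
            (Rot (2 * Real.pi * a / n) ⊗ₖ Rot (2 * Real.pi * b / n)) : Matrix (Fin 4) (Fin 4) ℂ)
         + (Matrix.reindex finProdFinEquiv finProdFinEquiv
            (Rot (2 * Real.pi * (n - a : ℕ) / n) ⊗ₖ Rot (2 * Real.pi * (n - b : ℕ) / n)) :
              Matrix (Fin 4) (Fin 4) ℂ)))
    = (n : ℂ) •
      !![(Real.cos (2 * Real.pi / n) : ℂ), 0, 0, -Complex.I * (Real.sin (2 * Real.pi / n) : ℂ);
         0, (Real.cos (2 * Real.pi / n) : ℂ), Complex.I * (Real.sin (2 * Real.pi / n) : ℂ), 0;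
         0, Complex.I * (Real.sin (2 * Real.pi / n) : ℂ), (Real.cos (2 * Real.pi / n) : ℂ), 0;
         -Complex.I * (Real.sin (2 * Real.pi / n) : ℂ), 0, 0,
           (Real.cos (2 * Real.pi / n) : ℂ)] := by
  have inner : ∀ a ∈ Finset.Icc 1 ((n - 1) / 2), (∑ b ∈ Finset.range n,
      (Complex.exp (2 * Real.pi * Complex.I / n)) ^ (-((a : ℤ) * (b : ℤ))) •
        ((Matrix.reindex finProdFinEquiv finProdFinEquiv
            (Rot (2 * Real.pi * a / n) ⊗ₖ Rot (2 * Real.pi * b / n)) : Matrix (Fin 4) (Fin 4) ℂ)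
         + (Matrix.reindex finProdFinEquiv finProdFinEquiv
            (Rot (2 * Real.pi * (n - a : ℕ) / n) ⊗ₖ Rot (2 * Real.pi * (n - b : ℕ) / n)) :
              Matrix (Fin 4) (Fin 4) ℂ)))
      = if a = 1 then (n * (Real.cos (2 * Real.pi / n) : ℂ)) • (1 : Matrix (Fin 4) (Fin 4) ℂ)
          + (-Complex.I * n * (Real.sin (2 * Real.pi / n) : ℂ)) • rightAngleSq else 0 := by
    intro a ha
    obtain ⟨h1, h2⟩ := Finset.mem_Icc.1 ha
    trans (2 * (Real.cos (2 * Real.pi * a / n) : ℂ) * (if a = 1 then (n : ℂ) / 2 else 0)) •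
          (1 : Matrix (Fin 4) (Fin 4) ℂ)
        + (2 * (Real.sin (2 * Real.pi * a / n) : ℂ) *
          (if a = 1 then -Complex.I * (n : ℂ) / 2 else 0)) • rightAngleSq
    · rw [← sum_cos hn h1 h2, ← sum_sin hn h1 h2, Finset.mul_sum, Finset.mul_sum,
        Finset.sum_smul, Finset.sum_smul, ← Finset.sum_add_distrib]
      refine Finset.sum_congr rfl fun b hb => ?_
      have hb' := Finset.mem_range.1 hb
      rw [angle_compl n a (by omega) (by omega), angle_compl n b (by omega) (by omega), pair_eq,
        smul_add, smul_smul, smul_smul]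
      congr 2 <;> ring
    · split_ifs with h
      · subst h
        rw [Nat.cast_one, mul_one]
        congr 2 <;> ring
      · simp
  rw [Finset.sum_congr rfl inner, Finset.sum_ite_eq', if_pos (Finset.mem_Icc.2 (by omega))]
  ext i j
  fin_cases i <;> fin_cases j <;>
    simp [rightAngleSq, -Complex.ofReal_cos, -Complex.ofReal_sin] <;> ring
end

section
/- Let n ≥ 2 be an integer and φ ∈ ℝ, set a = cos(2π/n), b = sin(2π/n), and for x ∈ ℂ let R̆(x) be the Yang-Baxterized matrix [[a(x−1)², 0, 0, i·b(x²−1)e^{iφ}], [0, −i·b(x²−1), a(x−1)², 0], [0, a(x−1)², −i·b(x²−1), 0], [i·b(x²−1)e^{−iφ}, 0, 0, a(x−1)²]]. Then for every real x, R̆(x)·R̆(x)† = ρ·I₄, where R̆(x)† is the conjugate transpose, I₄ is the 4×4 identity, and ρ = a²(x−1)⁴ + b²(x²−1)². -/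
/-!
The entries `a(x-1)²` are real and the entries `±i b(x²-1)` are purely imaginary up to the phases
`e^{±iφ}`. Each row has one entry of each kind, so its squared norm is
`ρ = a²(x-1)⁴ + b²(x²-1)²`. Two rows either have disjoint supports or pair a real entry with an
imaginary one twice, and these two products cancel because conjugation flips the sign of `i` and
swaps the two phases.
-/

open Matrix Complex

/-- The Yang-Baxterized matrix R̆(x) of the gate 𝔅ₙ,φ. -/
noncomputable def Rbr (n : ℕ) (φ : ℝ) (x : ℂ) : Matrix (Fin 4) (Fin 4) ℂ :=
  let a : ℂ := (Real.cos (2 * Real.pi / n) : ℂ)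
  let b : ℂ := (Real.sin (2 * Real.pi / n) : ℂ)
  !![a * (x - 1) ^ 2, 0, 0, Complex.I * b * (x ^ 2 - 1) * Complex.exp (Complex.I * φ);
     0, -(Complex.I * b * (x ^ 2 - 1)), a * (x - 1) ^ 2, 0;
     0, a * (x - 1) ^ 2, -(Complex.I * b * (x ^ 2 - 1)), 0;
     Complex.I * b * (x ^ 2 - 1) * Complex.exp (-(Complex.I * φ)), 0, 0, a * (x - 1) ^ 2]

/-- For real x, R̆(x)·R̆(x)† = ρ·I₄ with ρ = a²(x−1)⁴ + b²(x²−1)². -/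
theorem Rbr_rho_unitary (n : ℕ) (hn : 2 ≤ n) (φ : ℝ) (x : ℝ) :
    Rbr n φ (x : ℂ) * (Rbr n φ (x : ℂ))ᴴ
      = (((Real.cos (2 * Real.pi / n)) ^ 2 * (x - 1) ^ 4
          + (Real.sin (2 * Real.pi / n)) ^ 2 * (x ^ 2 - 1) ^ 2 : ℝ) : ℂ)
        • (1 : Matrix (Fin 4) (Fin 4) ℂ) := by
  -- For real `x` and `φ`, conjugation swaps the two phases `e^{±iφ}`.
  have h1 : (starRingEnd ℂ) (Complex.exp (Complex.I * φ)) = Complex.exp (-(Complex.I * φ)) := by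
    rw [← Complex.exp_conj]; simp
  have h2 : (starRingEnd ℂ) (Complex.exp (-(Complex.I * φ))) = Complex.exp (Complex.I * φ) := by
    rw [← Complex.exp_conj]; simp
  have h3 : Complex.exp (Complex.I * φ) * Complex.exp (-(Complex.I * φ)) = 1 := by
    rw [← Complex.exp_add]; simp
  have hI := Complex.I_sq
  unfold Rbr
  -- Name the real entries, so that `simp` keeps them as opaque casts.
  generalize Real.cos (2 * Real.pi / n) = a
  generalize Real.sin (2 * Real.pi / n) = b
  generalize Complex.exp (Complex.I * φ) = e at *
  generalize Complex.exp (-(Complex.I * φ)) = f at *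
  ext i j
  fin_cases i <;> fin_cases j <;>
    simp [Matrix.mul_apply, Fin.sum_univ_four, h1, h2] <;> grind
end

section
/- For all complex numbers α, β and every nonzero complex number q, the 4×4 matrix R_{α,β,q} = [[α, 0, 0, β·q], [0, −β, α, 0], [0, α, −β, 0], [β·q⁻¹, 0, 0, α]] satisfies the braided parameter-independent Yang–Baxter equation (R ⊗ I₂)(I₂ ⊗ R)(R ⊗ I₂) = (I₂ ⊗ R)(R ⊗ I₂)(I₂ ⊗ R) with R = R_{α,β,q}. -/
/-!
Once `R ⊗ I₂` and `I₂ ⊗ R` are written out as explicit `8 × 8` matrices (`RI_Rg`, `IR_Rg`), the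
Yang–Baxter equation is a finite list of cubic identities in `α`, `β`, `q` and `q⁻¹`. Each of them
follows from the commutative ring axioms together with `q * q⁻¹ = 1`, which is where `q ≠ 0` enters.
-/

open Matrix Complex
open scoped Kronecker

/-- The general family R_{α,β,q}. -/
noncomputable def Rg (α β q : ℂ) : Matrix (Fin 4) (Fin 4) ℂ :=
  !![α, 0, 0, β * q; 0, -β, α, 0; 0, α, -β, 0; β * q⁻¹, 0, 0, α]

/-- The entries of `R ⊗ I₂`: every entry of `R` becomes a scalar `2 × 2` block. -/
lemma RI_Rg (α β q : ℂ) : RI (Rg α β q) =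
    !![α, 0, 0, 0, 0, 0, β * q, 0;
       0, α, 0, 0, 0, 0, 0, β * q;
       0, 0, -β, 0, α, 0, 0, 0;
       0, 0, 0, -β, 0, α, 0, 0;
       0, 0, α, 0, -β, 0, 0, 0;
       0, 0, 0, α, 0, -β, 0, 0;
       β * q⁻¹, 0, 0, 0, 0, 0, α, 0;
       0, β * q⁻¹, 0, 0, 0, 0, 0, α] := by
  ext i j
  fin_cases i <;> fin_cases j <;>
    simp [RI, Rg, finProdFinEquiv, Fin.divNat, Fin.modNat]

/-- The entries of `I₂ ⊗ R`: two copies of `R` along the diagonal. -/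
lemma IR_Rg (α β q : ℂ) : IR (Rg α β q) =
    !![α, 0, 0, β * q, 0, 0, 0, 0;
       0, -β, α, 0, 0, 0, 0, 0;
       0, α, -β, 0, 0, 0, 0, 0;
       β * q⁻¹, 0, 0, α, 0, 0, 0, 0;
       0, 0, 0, 0, α, 0, 0, β * q;
       0, 0, 0, 0, 0, -β, α, 0;
       0, 0, 0, 0, 0, α, -β, 0;
       0, 0, 0, 0, β * q⁻¹, 0, 0, α] := by
  ext i j
  fin_cases i <;> fin_cases j <;>
    simp [IR, Rg, finProdFinEquiv, Fin.divNat, Fin.modNat]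

set_option maxHeartbeats 4000000 in
/-- For all α, β and q ≠ 0, R_{α,β,q} satisfies the braided Yang–Baxter equation. -/
theorem Rg_yang_baxter (α β q : ℂ) (hq : q ≠ 0) :
    RI (Rg α β q) * IR (Rg α β q) * RI (Rg α β q)
      = IR (Rg α β q) * RI (Rg α β q) * IR (Rg α β q) := by
  rw [RI_Rg, IR_Rg]
  ext i j
  fin_cases i <;> fin_cases j <;>
    simp [Matrix.mul_apply, Fin.sum_univ_succ] <;> field_simp <;> ring
end

section
/- Let α, β ∈ ℂ be both nonzero and satisfy α·conj(α) + β·conj(β) = 1 and α·conj(β) + β·conj(α) = 0. Then there exist real numbers t and θ such that α = e^{it}·cos θ and β = i·e^{it}·sin θ. -/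
open Complex

/-!
The two conditions are equivalent to `|α + β| = |α - β| = 1`. Writing `α + β = e^{ia}` and
`α - β = e^{ib}` (`exists_eq_exp_of_mul_conj_eq_one`), the half-sum and half-difference of these
exponentials are `e^{it} cos θ` and `i e^{it} sin θ` with `t = (a + b) / 2`, `θ = (a - b) / 2`.
-/

lemma exists_eq_exp_of_mul_conj_eq_one (z : ℂ) (h : z * starRingEnd ℂ z = 1) :
    ∃ a : ℝ, z = Complex.exp (Complex.I * a) := by
  have hn : ‖z‖ = 1 := by
    rw [Complex.mul_conj, Complex.normSq_eq_norm_sq] at h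
    have h' : ‖z‖ ^ 2 = 1 := by exact_mod_cast h
    exact (pow_eq_one_iff_of_nonneg (norm_nonneg z) two_ne_zero).1 h'
  refine ⟨Complex.arg z, ?_⟩
  have := Complex.norm_mul_exp_arg_mul_I z
  rw [hn, Complex.ofReal_one, one_mul, mul_comm] at this
  exact this.symm

/-- If α, β are nonzero with α·conj(α) + β·conj(β) = 1 and α·conj(β) + β·conj(α) = 0,
then α = e^{it}·cos θ and β = i·e^{it}·sin θ for some real t, θ. -/
theorem polar_form_of_unitarity_conditions (α β : ℂ) (hα : α ≠ 0) (hβ : β ≠ 0)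
    (h1 : α * starRingEnd ℂ α + β * starRingEnd ℂ β = 1)
    (h2 : α * starRingEnd ℂ β + β * starRingEnd ℂ α = 0) :
    ∃ t θ : ℝ, α = Complex.exp (Complex.I * t) * (Real.cos θ : ℂ) ∧
      β = Complex.I * Complex.exp (Complex.I * t) * (Real.sin θ : ℂ) := by
  -- The sum and difference of the two conditions say that `α + β` and `α - β` are unimodular.
  obtain ⟨a, ha⟩ := exists_eq_exp_of_mul_conj_eq_one (α + β) (by
    rw [map_add]; linear_combination h1 + h2)
  obtain ⟨b, hb⟩ := exists_eq_exp_of_mul_conj_eq_one (α - β) (by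
    rw [map_sub]; linear_combination h1 - h2)
  -- With `t` the mean and `θ` half the difference of the phases, `α ± β = e^{i(t ± θ)}`,
  -- and Euler's formula gives `α` and `β`.
  refine ⟨(a + b) / 2, (a - b) / 2, ?_⟩
  set t : ℝ := (a + b) / 2 with ht
  set θ : ℝ := (a - b) / 2 with hθ
  have ha' : α + β = Complex.exp (Complex.I * t) *
      (Complex.cos θ + Complex.sin θ * Complex.I) := by
    rw [← Complex.exp_mul_I, ← Complex.exp_add, ha, ht, hθ]
    congr 1; push_cast; ring
  have hb' : α - β = Complex.exp (Complex.I * t) *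
      (Complex.cos θ - Complex.sin θ * Complex.I) := by
    have hc : Complex.cos θ - Complex.sin θ * Complex.I = Complex.exp (-θ * Complex.I) := by
      rw [Complex.exp_mul_I, Complex.cos_neg, Complex.sin_neg]; ring
    rw [hc, ← Complex.exp_add, hb, ht, hθ]
    congr 1; push_cast; ring
  rw [Complex.ofReal_cos, Complex.ofReal_sin]
  constructor
  · linear_combination (ha' + hb') / 2
  · linear_combination (ha' - hb') / 2
end

section
/- Let α, β ∈ ℂ and q ∈ ℂ with q ≠ 0. The gate R_{α,β,q} is entangling—that is, there exist u, v ∈ ℂ² such that R_{α,β,q}·(u ⊗ v) is not a product state—if and only if α ≠ 0 and β ≠ 0. -/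
/-!
If `α = 0` or `β = 0`, the gate is the swap of the two tensor factors followed by a local operator
on each factor, so it maps product states to product states. If both are nonzero, the image of
`e₀ ⊗ e₀` is `(α, 0, 0, β * q⁻¹)`, for which `w₀₀ w₁₁ - w₀₁ w₁₀ = α β q⁻¹ ≠ 0`.
-/

open Matrix Complex

/-- The Kronecker product u ⊗ v of two vectors in ℂ². -/
def kron2 (u v : Fin 2 → ℂ) : Fin 4 → ℂ :=
  ![u 0 * v 0, u 0 * v 1, u 1 * v 0, u 1 * v 1]

/-- R_{α,β,q} is entangling iff α ≠ 0 and β ≠ 0. -/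
theorem Rg_entangling_iff (α β q : ℂ) (hq : q ≠ 0) :
    (∃ u v : Fin 2 → ℂ, ¬ ∃ u' v' : Fin 2 → ℂ,
        (Rg α β q).mulVec (kron2 u v) = kron2 u' v')
      ↔ (α ≠ 0 ∧ β ≠ 0) := by
  constructor
  · rintro ⟨u, v, h⟩
    constructor
    · rintro rfl
      -- With `α = 0` the gate swaps the factors and then applies a local operator to each.
      refine h ⟨![β * q * v 1, -β * v 0], ![u 1, -q⁻¹ * u 0], ?_⟩
      ext i
      fin_cases i <;> simp [Rg, kron2, Matrix.mulVec, dotProduct, Fin.sum_univ_four] <;>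
        field_simp
    · rintro rfl
      -- With `β = 0` the gate is `α` times the swap.
      refine h ⟨![α * v 0, α * v 1], u, ?_⟩
      ext i
      fin_cases i <;> simp [Rg, kron2, Matrix.mulVec, dotProduct, Fin.sum_univ_four] <;> ring
  · rintro ⟨hα, hβ⟩
    -- The image of `e₀ ⊗ e₀` is `(α, 0, 0, β * q⁻¹)`.
    refine ⟨![1, 0], ![1, 0], ?_⟩
    rintro ⟨a, b, h⟩
    have h0 := congrFun h 0
    have h1 := congrFun h 1
    have h3 := congrFun h 3
    simp [Rg, kron2, Matrix.mulVec, dotProduct, Fin.sum_univ_four] at h0 h1 h3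
    have hne : α * (β * q⁻¹) ≠ 0 := mul_ne_zero hα (mul_ne_zero hβ (inv_ne_zero hq))
    apply hne
    rw [h0, h3]
    rcases h1 with h1 | h1 <;> simp [h1]
end

section
/- Let θ, φ ∈ ℝ and μ ∈ ℝ, and let H(θ,φ) = μ·sin θ · [[−sin θ, 0, 0, −i·cos θ·e^{iφ}], [0, 0, 0, 0], [0, 0, 0, 0], [i·cos θ·e^{−iφ}, 0, 0, sin θ]]. Then the characteristic polynomial of H(θ,φ) is X²·(X² − μ²·sin²θ); in particular the eigenvalues of H(θ,φ) are ±μ·sin θ together with 0 of multiplicity two. -/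
/-!
The two middle rows of `H` vanish, so `det (X - H)` is `X ^ 2` times the determinant of the
corner `2 × 2` block. In that block the phases `e^{iφ}` and `e^{-iφ}` cancel, leaving
`X² - μ² sin²θ (sin²θ + cos²θ) = X² - μ² sin²θ`.
-/

open Matrix Complex Polynomial

/-- The Hamiltonian H(θ,φ) obtained from the gate R̆(θ,φ) with φ time-dependent,
μ playing the role of φ̇. -/
noncomputable def Hθφ (θ φ μ : ℝ) : Matrix (Fin 4) (Fin 4) ℂ :=
  ((μ * Real.sin θ : ℝ) : ℂ) •
    !![-(Real.sin θ : ℂ), 0, 0, -(Complex.I * (Real.cos θ : ℂ) * Complex.exp (Complex.I * φ));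
       0, 0, 0, 0;
       0, 0, 0, 0;
       Complex.I * (Real.cos θ : ℂ) * Complex.exp (-(Complex.I * φ)), 0, 0, (Real.sin θ : ℂ)]

/-- The characteristic polynomial of H(θ,φ) is X²·(X² − μ²·sin²θ); in particular its
eigenvalues are ±μ·sin θ and 0 with multiplicity two. -/
theorem Hθφ_charpoly (θ φ μ : ℝ) :
    (Hθφ θ φ μ).charpoly
      = X ^ 2 * (X ^ 2 - C (((μ : ℂ)) ^ 2 * ((Real.sin θ : ℂ)) ^ 2)) := by
  have hexp : Complex.exp (Complex.I * φ) * Complex.exp (-(Complex.I * φ)) = 1 := by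
    rw [← Complex.exp_add, add_neg_cancel, Complex.exp_zero]
  have hsc : (Real.sin θ : ℂ) ^ 2 + (Real.cos θ : ℂ) ^ 2 = 1 := by
    exact_mod_cast Real.sin_sq_add_cos_sq θ
  have hI : Complex.I ^ 2 = -1 := Complex.I_sq
  unfold Hθφ
  rw [Complex.ofReal_mul]
  -- From here on only the polynomial relations `hexp`, `hsc`, `hI` between the entries matter.
  generalize Complex.exp (Complex.I * φ) = e at *
  generalize Complex.exp (-(Complex.I * φ)) = f at *
  generalize (Real.sin θ : ℂ) = s at *
  generalize (Real.cos θ : ℂ) = c at *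
  generalize (μ : ℂ) = m at *
  generalize Complex.I = i at *
  have h : (C s : ℂ[X]) ^ 2 - C i ^ 2 * C c ^ 2 * (C e * C f) = 1 := by
    simp only [← C_pow, ← C_mul, ← C_sub]
    rw [hexp, hI, ← C_1]
    congr 1
    linear_combination hsc
  simp [Matrix.charpoly, Matrix.charmatrix, Matrix.det_succ_row_zero, Fin.sum_univ_succ,
    Fin.succAbove]
  linear_combination (-(X : ℂ[X]) ^ 2 * C m ^ 2 * C s ^ 2) * h
end

section
/- Let θ ∈ ℝ with sin θ ≠ −1 (for the + sign) respectively sin θ ≠ 1 (for the − sign), and define f± = √((1 ± sin θ)/2), g± = cos θ/(√2·√(1 ± sin θ)), and for φ ∈ ℝ the vector v±(φ) = (i·f±·e^{iφ}, 0, 0, g±) ∈ ℂ⁴. Then the Berry phase γ± = i·∫₀^{2π} ⟨v±(φ), (d/dφ)v±(φ)⟩ dφ equals −π·(1 ± sin θ), where ⟨·,·⟩ is the standard Hermitian inner product on ℂ⁴ (conjugate-linear in the first argument). -/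
/-!
Only the first component of `vv θ ε φ` depends on `φ`, and its derivative is `I` times itself.
Hence the integrand is the constant `I * f ^ 2`, with `f ^ 2 = (1 + ε * sin θ) / 2` since the
radicand is nonnegative. Integrating over a period and multiplying by `I` gives
`-2 * π * f ^ 2 = -π * (1 + ε * sin θ)`.
-/

open Matrix Complex

/-- The eigenstate |λ^{ε}(θ,φ)⟩ = (i·f·e^{iφ}, 0, 0, g), with
f = √((1 + ε·sin θ)/2) and g = cos θ/(√2·√(1 + ε·sin θ)), for the sign ε = ±1. -/
noncomputable def vv (θ ε : ℝ) (φ : ℝ) : Fin 4 → ℂ :=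
  ![Complex.I * (Real.sqrt ((1 + ε * Real.sin θ) / 2) : ℂ) * Complex.exp (Complex.I * φ),
    0, 0,
    ((Real.cos θ / (Real.sqrt 2 * Real.sqrt (1 + ε * Real.sin θ)) : ℝ) : ℂ)]

lemma hasDerivAt_vv (θ ε φ : ℝ) :
    HasDerivAt (vv θ ε) ![Complex.I * vv θ ε φ 0, 0, 0, 0] φ := by
  rw [hasDerivAt_pi]
  intro k
  fin_cases k
  · have h1 : HasDerivAt (fun x : ℝ => Complex.I * (x : ℂ)) (Complex.I * 1) φ :=
      (Complex.ofRealCLM.hasDerivAt (x := φ)).const_mul Complex.I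
    have h2 := h1.cexp.const_mul
      (Complex.I * (Real.sqrt ((1 + ε * Real.sin θ) / 2) : ℂ))
    refine HasDerivAt.congr_deriv (f := fun x => vv θ ε x 0) h2 ?_
    simp only [vv, Fin.zero_eta, Matrix.cons_val_zero]
    ring
  · exact hasDerivAt_const φ (0 : ℂ)
  · exact hasDerivAt_const φ (0 : ℂ)
  · exact hasDerivAt_const φ _

/-- The Berry connection `⟨v, ∂_φ v⟩` is independent of `φ`. -/
lemma berry_connection (θ ε φ : ℝ) (hnn : 0 ≤ (1 + ε * Real.sin θ) / 2) :
    (fun k => starRingEnd ℂ (vv θ ε φ k)) ⬝ᵥ deriv (vv θ ε) φ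
      = Complex.I * (((1 + ε * Real.sin θ) / 2 : ℝ) : ℂ) := by
  have hexp : Complex.exp (-Complex.I * φ) * Complex.exp (Complex.I * φ) = 1 := by
    rw [← Complex.exp_add]; simp
  have hsq : (Real.sqrt ((1 + ε * Real.sin θ) / 2) : ℂ) ^ 2
      = (((1 + ε * Real.sin θ) / 2 : ℝ) : ℂ) := by
    rw [← Complex.ofReal_pow, Real.sq_sqrt hnn]
  rw [(hasDerivAt_vv θ ε φ).deriv, ← hsq]
  simp only [dotProduct, Fin.sum_univ_four, vv, Matrix.cons_val, map_mul, Complex.conj_I,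
    Complex.conj_ofReal, ← Complex.exp_conj, mul_zero, add_zero]
  generalize (Real.sqrt ((1 + ε * Real.sin θ) / 2) : ℂ) = f
  linear_combination (-Complex.I ^ 3 * f ^ 2) * hexp + (-Complex.I * f ^ 2) * Complex.I_sq

/-- The Berry phase γ± = i·∫₀^{2π} ⟨v±(φ), ∂_φ v±(φ)⟩ dφ equals −π(1 ± sin θ),
where the sign ε = 1 (with sin θ ≠ −1) or ε = −1 (with sin θ ≠ 1). -/
theorem berry_phase (θ ε : ℝ) (hε : ε = 1 ∨ ε = -1) (h : Real.sin θ ≠ -ε) :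
    Complex.I * ∫ φ in (0:ℝ)..(2 * Real.pi),
        (fun k => starRingEnd ℂ (vv θ ε φ k)) ⬝ᵥ deriv (vv θ ε) φ
      = -(Real.pi : ℂ) * (1 + (ε : ℂ) * (Real.sin θ : ℂ)) := by
  have hnn : 0 ≤ (1 + ε * Real.sin θ) / 2 := by
    rcases hε with rfl | rfl <;> linarith [Real.neg_one_le_sin θ, Real.sin_le_one θ]
  simp only [berry_connection θ ε _ hnn, intervalIntegral.integral_const, Complex.real_smul]
  push_cast
  linear_combination ((Real.pi : ℂ) * (1 + ε * Complex.sin θ)) * Complex.I_sq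
end

section
/- Let n ≥ 2 be an integer, ω = e^{2πi/n}, and let j, k be natural numbers (the gradings of the basis vectors |0⟩ and |1⟩). Define the 4×4 matrix 𝔅_ψ = [[ω^{j²}, 0, 0, 0], [0, 0, ω^{jk}, 0], [0, ω^{jk}, 0, 0], [0, 0, 0, ω^{k²}]]. Then 𝔅_ψ is entangling—there exist u, v ∈ ℂ² such that 𝔅_ψ·(u ⊗ v) is not a product state—if and only if ω^{j²}·ω^{k²} ≠ ω^{2jk}. -/
/-!
Write `a = ω ^ (j²)`, `b = ω ^ (jk)`, `d = ω ^ (k²)`. The gate sends `u ⊗ v` to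
`(a u₀v₀, b u₁v₀, b u₀v₁, d u₁v₁)`, whose determinant is `(a d - b²) u₀u₁v₀v₁`. If `a d = b²`,
this vector is the product `(a v₀, b v₁) ⊗ (u₀, (b / a) u₁)`; otherwise the image of
`(1, 1) ⊗ (1, 1)` has nonzero determinant and so is not a product.
-/

open Matrix Complex

/-- The braiding gate 𝔅_ψ coming from the anyonic (graded) braiding, where the basis
vectors |0⟩ and |1⟩ have degrees j and k, and ω = e^{2πi/n}. -/
noncomputable def Bψ (n : ℕ) (j k : ℕ) : Matrix (Fin 4) (Fin 4) ℂ :=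
  let ω : ℂ := Complex.exp (2 * Real.pi * Complex.I / n)
  !![ω ^ (j ^ 2), 0, 0, 0;
     0, 0, ω ^ (j * k), 0;
     0, ω ^ (j * k), 0, 0;
     0, 0, 0, ω ^ (k ^ 2)]

/-- 𝔅_ψ is entangling iff ω^{j²}·ω^{k²} ≠ ω^{2jk}. -/
theorem Bψ_entangling_iff (n : ℕ) (hn : 2 ≤ n) (j k : ℕ) :
    (∃ u v : Fin 2 → ℂ, ¬ ∃ u' v' : Fin 2 → ℂ,
        (Bψ n j k).mulVec (kron2 u v) = kron2 u' v')
      ↔ (Complex.exp (2 * Real.pi * Complex.I / n)) ^ (j ^ 2)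
          * (Complex.exp (2 * Real.pi * Complex.I / n)) ^ (k ^ 2)
        ≠ (Complex.exp (2 * Real.pi * Complex.I / n)) ^ (2 * j * k) := by
  have mulVec_kron2 : ∀ u v : Fin 2 → ℂ, (Bψ n j k).mulVec (kron2 u v) =
      ![Complex.exp (2 * Real.pi * Complex.I / n) ^ (j ^ 2) * (u 0 * v 0),
        Complex.exp (2 * Real.pi * Complex.I / n) ^ (j * k) * (u 1 * v 0),
        Complex.exp (2 * Real.pi * Complex.I / n) ^ (j * k) * (u 0 * v 1),
        Complex.exp (2 * Real.pi * Complex.I / n) ^ (k ^ 2) * (u 1 * v 1)] := by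
    intro u v
    ext i
    fin_cases i <;> simp [Bψ, kron2, Matrix.mulVec, dotProduct, Fin.sum_univ_four]
  have hω : Complex.exp (2 * Real.pi * Complex.I / n) ≠ 0 := Complex.exp_ne_zero _
  simp only [mulVec_kron2]
  generalize Complex.exp (2 * Real.pi * Complex.I / n) = ω at hω ⊢
  have ha : ω ^ (j ^ 2) ≠ 0 := pow_ne_zero _ hω
  have hb : ω ^ (2 * j * k) = ω ^ (j * k) * ω ^ (j * k) := by
    rw [← pow_add]
    congr 1
    ring
  rw [hb]
  generalize ω ^ (j ^ 2) = a at ha ⊢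
  generalize ω ^ (j * k) = b
  generalize ω ^ (k ^ 2) = d
  constructor
  · rintro ⟨u, v, huv⟩ had
    have hd : d = b * b / a := by
      rw [eq_div_iff ha, ← had]
      ring
    -- The factors trade places, and `a d = b ^ 2` lets the phases be split between them.
    refine huv ⟨![a * v 0, b * v 1], ![u 0, b / a * u 1], ?_⟩
    ext i
    fin_cases i <;> simp [kron2, hd] <;> field_simp
  · intro had
    -- The image of `(1, 1) ⊗ (1, 1)` is `(a, b, b, d)`, whose determinant is `a d - b ^ 2`.
    refine ⟨![1, 1], ![1, 1], ?_⟩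
    rintro ⟨u', v', h⟩
    have h0 := congrFun h 0
    have h1 := congrFun h 1
    have h2 := congrFun h 2
    have h3 := congrFun h 3
    simp [kron2] at h0 h1 h2 h3
    apply had
    calc a * d = (u' 0 * v' 1) * (u' 1 * v' 0) := by rw [h0, h3]; ring
      _ = b * b := by rw [← h1, ← h2]
end
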